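/- Let K be a real quadratic field and let O be a unit-generated order of K, that is, an order generated as a ℤ-module by its group of units O^×. Fix a real embedding of K, and let ε be the smallest unit of O satisfying ε > 1. Then O = ℤ + εℤ = ℤ[ε]. -/

import Mathlib

noncomputable section

/-- `x` is a unit of the subring `O` of `ℝ`. -/
def IsUnitOf (O : Subring ℝ) (x : ℝ) : Prop := x ∈ O ∧ ∃ y ∈ O, x * y = 1

/-- `O` is an order of the subfield `K` of `ℝ`: a subring of the ring of integers of `K`
that is a free `ℤ`-module of rank 2 with fraction field `K`. -/
def IsOrderOf (K : Subfield ℝ) (O : Subring ℝ) : Prop :=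
  (O : Set ℝ) ⊆ K ∧ (∀ x ∈ O, IsIntegral ℤ x) ∧
    Module.Free ℤ O ∧ Module.finrank ℤ O = 2 ∧
    ∀ x ∈ K, ∃ p ∈ O, ∃ q ∈ O, q ≠ 0 ∧ x = p / q

/-- A subring `O` of `ℝ` is unit-generated if it is generated, as a `ℤ`-module
(equivalently, as an additive group), by its set of units. -/
def IsUnitGenerated (O : Subring ℝ) : Prop :=
  AddSubgroup.closure {x : ℝ | IsUnitOf O x} = O.toAddSubgroup

/-- `K` is a real quadratic field: `K = ℚ(√D)` for a positive nonsquare integer `D`. -/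
def IsRealQuadratic (K : Subfield ℝ) : Prop :=
  ∃ D : ℤ, 0 < D ∧ ¬ IsSquare D ∧ K = Subfield.closure {Real.sqrt D}

/-- The ring of integers (maximal order) of a subfield `K` of `ℝ`: the elements of `K`
that are integral over `ℤ`. -/
def ringOfIntegers (K : Subfield ℝ) : Subring ℝ :=
  (integralClosure ℤ ℝ).toSubring ⊓ K.toSubring

/-!
The logarithm turns the units of `O` into an additive subgroup of `ℝ` whose least positive element
is `log ε`; since `ℝ` is archimedean, every unit is therefore `±ε ^ k` for some `k : ℤ`. The
negative powers of `ε` already lie in `ℤ[ε]`, because reversing a monic equation of `ε⁻¹` writes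
`ε⁻¹` as a polynomial in `ε`. So `ℤ[ε]` contains all units of `O`, and hence `O`. Finally, by
Cayley–Hamilton `ε` is a root of a monic integer polynomial whose degree is the rank of `O`, so the
powers of `ε` below the rank span `ℤ[ε]`.
-/

open Polynomial

section Adjoin

variable {R : Type*} [CommRing R]

theorem inv_mem_adjoin_of_isIntegral_inv {K : Type*} [Field K] [Algebra R K] {x : K}
    (hint : IsIntegral R x⁻¹) : x⁻¹ ∈ Algebra.adjoin R {x} := by
  obtain rfl | hx := eq_or_ne x 0
  · simp
  obtain ⟨p, hp, hpx⟩ := hint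
  have hrev : aeval x p.reverse = 0 := by
    let : Invertible x⁻¹ := invertibleOfNonzero (inv_ne_zero hx)
    simpa [aeval_def] using (eval₂_reverse_eq_zero_iff (algebraMap R K) x⁻¹ p).2 hpx
  have hdivX : aeval x p.reverse.divX * x + 1 = 0 := by
    rw [← divX_mul_X_add p.reverse, coeff_zero_reverse, hp.leadingCoeff] at hrev
    simpa using hrev
  have hinv : x⁻¹ = aeval x (-p.reverse.divX) := by
    rw [map_neg]
    exact inv_eq_of_mul_eq_one_left (by linear_combination -hdivX)
  rw [hinv]
  exact aeval_mem_adjoin_singleton R x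

theorem mem_adjoin_singleton_iff_exists_sum {A : Type*} [Ring A] [Algebra R A] {x : A} {p : R[X]}
    (hp : p.Monic) (hpx : aeval x p = 0) (y : A) :
    y ∈ Algebra.adjoin R {x} ↔ ∃ c : Fin p.natDegree → R, y = ∑ i, c i • x ^ (i : ℕ) := by
  classical
  have hrange : ((Finset.range p.natDegree).image (x ^ ·) : Set A) =
      Set.range fun i : Fin p.natDegree ↦ x ^ (i : ℕ) := by
    ext; simp [Fin.exists_iff]
  rw [← Subalgebra.mem_toSubmodule, ← Submodule.span_range_natDegree_eq_adjoin hp hpx, hrange,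
    Submodule.mem_span_range_iff_exists_fun]
  simp only [eq_comm]

theorem exists_monic_natDegree_eq_finrank_aeval_eq_zero [Nontrivial R] {A : Type*} [Ring A]
    [Algebra R A] [Module.Finite R A] [Module.Free R A] (x : A) :
    ∃ p : R[X], p.Monic ∧ p.natDegree = Module.finrank R A ∧ aeval x p = 0 :=
  ⟨_, LinearMap.charpoly_monic _, LinearMap.charpoly_natDegree _,
    Algebra.aeval_self_charpoly_lmul x⟩

end Adjoin

namespace IsUnitOf

variable {O : Subring ℝ} {x y : ℝ}

theorem ne_zero (hx : IsUnitOf O x) : x ≠ 0 :=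
  let ⟨_, _, _, hxy⟩ := hx
  left_ne_zero_of_mul_eq_one hxy

theorem inv (hx : IsUnitOf O x) : IsUnitOf O x⁻¹ := by
  obtain ⟨hxO, y, hyO, hxy⟩ := hx
  obtain rfl := eq_inv_of_mul_eq_one_right hxy
  exact ⟨hyO, x, hxO, by rwa [mul_comm]⟩

theorem mul (hx : IsUnitOf O x) (hy : IsUnitOf O y) : IsUnitOf O (x * y) := by
  refine ⟨O.mul_mem hx.1 hy.1, x⁻¹ * y⁻¹, O.mul_mem hx.inv.1 hy.inv.1, ?_⟩
  rw [mul_mul_mul_comm, mul_inv_cancel₀ hx.ne_zero, mul_inv_cancel₀ hy.ne_zero, one_mul]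

theorem neg (hx : IsUnitOf O x) : IsUnitOf O (-x) := by
  obtain ⟨hxO, y, hyO, hxy⟩ := hx
  exact ⟨O.neg_mem hxO, -y, O.neg_mem hyO, by rwa [neg_mul_neg]⟩

theorem abs (hx : IsUnitOf O x) : IsUnitOf O |x| := by
  obtain h | h := abs_choice x <;> rw [h]
  exacts [hx, hx.neg]

end IsUnitOf

/-- The image of the unit group of `O` under the logarithmic embedding `u ↦ log |u|`; note that
`Real.log u = log |u|` also for negative `u`. -/
def logUnits (O : Subring ℝ) : AddSubgroup ℝ where
  carrier := Real.log '' {u | IsUnitOf O u}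
  zero_mem' := ⟨1, ⟨O.one_mem, 1, O.one_mem, one_mul 1⟩, Real.log_one⟩
  add_mem' := by
    rintro _ _ ⟨u, hu, rfl⟩ ⟨v, hv, rfl⟩
    exact ⟨u * v, hu.mul hv, Real.log_mul hu.ne_zero hv.ne_zero⟩
  neg_mem' := by
    rintro _ ⟨u, hu, rfl⟩
    exact ⟨u⁻¹, hu.inv, Real.log_inv u⟩

section LeastUnit

variable {O : Subring ℝ} {ε : ℝ}

theorem isLeast_log_logUnits (hε : IsLeast {u | IsUnitOf O u ∧ 1 < u} ε) :
    IsLeast {l | l ∈ logUnits O ∧ 0 < l} (Real.log ε) := by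
  obtain ⟨⟨hεO, hε1⟩, hmin⟩ := hε
  refine ⟨⟨⟨ε, hεO, rfl⟩, Real.log_pos hε1⟩, ?_⟩
  rintro _ ⟨⟨u, hu, rfl⟩, hlog⟩
  rw [← Real.log_abs u] at hlog ⊢
  have hu1 : 1 < |u| := (Real.log_pos_iff (abs_nonneg u)).1 hlog
  exact Real.log_le_log (one_pos.trans hε1) (hmin ⟨hu.abs, hu1⟩)

theorem IsUnitOf.exists_eq_zpow_or_eq_neg_zpow (hε : IsLeast {u | IsUnitOf O u ∧ 1 < u} ε) {u : ℝ}
    (hu : IsUnitOf O u) : ∃ k : ℤ, u = ε ^ k ∨ u = -ε ^ k := by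
  have hε0 : 0 < ε := one_pos.trans hε.1.2
  have hlog : Real.log u ∈ AddSubgroup.closure {Real.log ε} :=
    AddSubgroup.cyclic_of_min (isLeast_log_logUnits hε) ▸ ⟨u, hu, rfl⟩
  obtain ⟨k, hk⟩ := AddSubgroup.mem_closure_singleton.1 hlog
  refine ⟨k, eq_or_eq_neg_of_abs_eq ?_⟩
  rw [← Real.exp_log_eq_abs hu.ne_zero, ← hk, zsmul_eq_mul, ← Real.log_zpow,
    Real.exp_log (zpow_pos hε0 k)]

theorem IsUnitGenerated.eq_closure_singleton (hug : IsUnitGenerated O)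
    (hε : IsLeast {u | IsUnitOf O u ∧ 1 < u} ε) (hint : IsIntegral ℤ ε⁻¹) :
    O = Subring.closure {ε} := by
  set S := Subring.closure {ε}
  have hεS : ε ∈ S := Subring.mem_closure_of_mem rfl
  have hinv : ε⁻¹ ∈ S :=
    (Algebra.adjoin_int {ε}).le (inv_mem_adjoin_of_isIntegral_inv hint)
  have hzpow (k : ℤ) : ε ^ k ∈ S := by
    cases k with
    | ofNat n => simpa using S.pow_mem hεS n
    | negSucc n => simpa [zpow_negSucc] using S.pow_mem hinv (n + 1)
  have hunits : {u | IsUnitOf O u} ⊆ S := fun u hu ↦ by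
    obtain ⟨k, rfl | rfl⟩ := hu.exists_eq_zpow_or_eq_neg_zpow hε
    exacts [hzpow k, S.neg_mem (hzpow k)]
  have hOS : O.toAddSubgroup ≤ S.toAddSubgroup := hug ▸ (AddSubgroup.closure_le _).2 hunits
  exact le_antisymm hOS (Subring.closure_le.2 <| Set.singleton_subset_iff.2 hε.1.1.1)

end LeastUnit

theorem unitGenerated_eq_zspan_general {O : Subring ℝ} [Module.Finite ℤ O] {n : ℕ}
    (hn : Module.finrank ℤ O = n) (hug : IsUnitGenerated O) {ε : ℝ}
    (hε : IsLeast {u | IsUnitOf O u ∧ 1 < u} ε) :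
    (∀ x : ℝ, x ∈ O ↔ ∃ c : Fin n → ℤ, x = ∑ i, (c i : ℝ) * ε ^ (i : ℕ)) ∧
      O = Subring.closure {ε} := by
  have hint : IsIntegral ℤ ε⁻¹ :=
    (IsIntegral.of_finite ℤ (⟨ε⁻¹, hε.1.1.inv.1⟩ : O)).algebraMap (B := ℝ)
  have hO : O = Subring.closure {ε} := hug.eq_closure_singleton hε hint
  let e : O := ⟨ε, hε.1.1.1⟩
  obtain ⟨p, hp, hdeg, hpe⟩ := exists_monic_natDegree_eq_finrank_aeval_eq_zero (R := ℤ) e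
  have hpε : aeval ε p = 0 :=
    (aeval_algebraMap_apply ℝ e p).trans (by rw [hpe, map_zero])
  obtain rfl : p.natDegree = n := hdeg.trans hn
  refine ⟨fun x ↦ ?_, hO⟩
  have hadjoin : x ∈ O ↔ x ∈ Algebra.adjoin ℤ {ε} := by
    rw [Algebra.adjoin_int, ← hO]; rfl
  simpa only [zsmul_eq_mul] using hadjoin.trans (mem_adjoin_singleton_iff_exists_sum hp hpε x)

/-- If `O` is a unit-generated order of a real quadratic field `K` and `ε` is the smallest
unit of `O` with `ε > 1`, then `O = ℤ + εℤ = ℤ[ε]`. -/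
theorem unitGenerated_eq_zspan (K : Subfield ℝ) (hK : IsRealQuadratic K)
    (O : Subring ℝ) (hO : IsOrderOf K O) (hug : IsUnitGenerated O)
    (ε : ℝ) (hεu : IsUnitOf O ε) (hε1 : 1 < ε)
    (hmin : ∀ u : ℝ, IsUnitOf O u → 1 < u → ε ≤ u) :
    (∀ x : ℝ, x ∈ O ↔ ∃ a b : ℤ, x = (a : ℝ) + (b : ℝ) * ε) ∧
      O = Subring.closure {ε} := by
  obtain ⟨-, -, _, hrank, -⟩ := hO
  have : Module.Finite ℤ O := Module.finite_of_finrank_pos (by omega)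
  simpa [Fin.exists_fin_succ_pi] using
    unitGenerated_eq_zspan_general hrank hug ⟨⟨hεu, hε1⟩, fun u hu ↦ hmin u hu.1 hu.2⟩
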